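/- Let Λ be a subalgebra of the full block upper triangular algebra E_{(ℓ_1,...,ℓ_t)}(F) such that for some index i the image Λ_{i(i+1)} of Λ in E_{(ℓ_i, ℓ_{i+1})}(F) is contained in the semisimple part M_{ℓ_i}(F) × M_{ℓ_{i+1}}(F) (i.e., Λ is not uniserial at i). Then Λ satisfies the standard identity s_{2n-2}, where n = ℓ_1 + ... + ℓ_t. -/

import Mathlib

open Matrix

/-- The standard polynomial `s_d` evaluated at `x : Fin d → R`. -/
noncomputable def stdPoly {R : Type*} [Ring R] (d : ℕ) (x : Fin d → R) : R :=
  ∑ σ : Equiv.Perm (Fin d), ((Equiv.Perm.sign σ : ℤˣ) : ℤ) • (List.ofFn fun i => x (σ i)).prod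

/-- `cum ℓ k` is `ℓ 0 + ⋯ + ℓ (k-1)`, the index where the `k`-th block starts. -/
def cum {t : ℕ} (ℓ : Fin t → ℕ) (k : ℕ) : ℕ :=
  ∑ i : Fin t, if (i : ℕ) < k then ℓ i else 0

/-- Block upper triangular with respect to the block sizes `ℓ`. -/
def BlockUT {F : Type*} [Field F] {t n : ℕ} (ℓ : Fin t → ℕ) (M : Matrix (Fin n) (Fin n) F) :
    Prop :=
  ∀ i j : Fin n, (∃ k : ℕ, (j : ℕ) < cum ℓ k ∧ cum ℓ k ≤ (i : ℕ)) → M i j = 0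

/-
Amitsur–Levitzki follows Rosset: over `ℚ`, tensor matrices `x k` with anticommuting variables `e k`
and put `V = ∑ k, x k ⊗ e k`. The entries of `V ^ 2` commute, and anticommutativity makes the traces
of all its positive powers vanish, so its characteristic polynomial is a power of `X` and `V ^ 2`
is nilpotent by Cayley–Hamilton. Reading off the coefficient of `e 0 ⋯ e (d - 1)` in `V ^ d = 0`
gives `s_d = 0`; generic matrices over `ℤ` transfer this to every commutative ring.

Pick `b` in block `i` and `c` in block `i + 1`. All elements of `Λ` have zero `(b, c)` and `(c, b)`
entries, and `Λ` is closed under products, so no path of indices contributing to a product of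
elements of `Λ` visits both `b` and `c`. By inclusion–exclusion the standard polynomial is the sum
of those obtained by erasing `b` and by erasing `c`, minus the one obtained by erasing both, and
these are evaluated at matrices of size at most `n - 1`.
-/

section NilpotencyFromTraces

variable {A m : Type*} [CommRing A] [Fintype m] [DecidableEq m]

open Polynomial

theorem derivative_det (N : Matrix m m A[X]) :
    derivative N.det = ∑ i, (N.updateRow i fun j => derivative (N i j)).det := by
  simp only [det_apply', derivative_sum]
  rw [Finset.sum_comm]
  refine Finset.sum_congr rfl fun σ _ => ?_
  rw [← C_eq_intCast, derivative_C_mul, derivative_prod_finset, Finset.mul_sum]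
  refine Finset.sum_equiv σ (by simp) fun i _ => ?_
  rw [← Finset.prod_erase_mul _ _ (Finset.mem_univ i), updateRow_self]
  congr 2
  refine Finset.prod_congr rfl fun j hj => ?_
  rw [updateRow_ne (σ.injective.ne (Finset.ne_of_mem_erase hj))]

theorem derivative_charpoly (Y : Matrix m m A) :
    derivative Y.charpoly = (adjugate (charmatrix Y)).trace := by
  rw [charpoly, derivative_det, trace]
  refine Finset.sum_congr rfl fun i _ => ?_
  rw [diag_apply, adjugate_apply]
  congr 2
  ext1 j
  obtain rfl | hij := eq_or_ne i j
  · simp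
  · simp [charmatrix_apply_ne, hij]

theorem map_C_mul_adjugate_charmatrix (Y : Matrix m m A) :
    C.mapMatrix Y * adjugate (charmatrix Y) =
      (X : A[X]) • adjugate (charmatrix Y) - Y.charpoly • 1 := by
  rw [charpoly, ← mul_adjugate (charmatrix Y), charmatrix, sub_mul, scalar_apply,
    ← smul_one_eq_diagonal, smul_mul_assoc, one_mul, sub_sub_cancel]

theorem trace_map_C_pow_succ_mul_adjugate_charmatrix {Y : Matrix m m A}
    (hY : ∀ k, (Y ^ (k + 1)).trace = 0) (k : ℕ) :
    (C.mapMatrix Y ^ (k + 1) * adjugate (charmatrix Y)).trace =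
      X ^ k * (C.mapMatrix Y * adjugate (charmatrix Y)).trace := by
  induction k with
  | zero => simp
  | succ k ih =>
    have htrace : (C.mapMatrix Y ^ (k + 1)).trace = 0 := by
      rw [← map_pow, RingHom.mapMatrix_apply, ← AddMonoidHom.map_trace, hY, map_zero]
    calc (C.mapMatrix Y ^ (k + 1 + 1) * adjugate (charmatrix Y)).trace
        = X * (C.mapMatrix Y ^ (k + 1) * adjugate (charmatrix Y)).trace := by
          rw [pow_succ, mul_assoc, map_C_mul_adjugate_charmatrix, mul_sub, trace_sub, mul_smul_comm,
            trace_smul, mul_smul_comm, mul_one, trace_smul, htrace, smul_zero, sub_zero,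
            smul_eq_mul]
      _ = X ^ (k + 1) * (C.mapMatrix Y * adjugate (charmatrix Y)).trace := by
          rw [ih, pow_succ', mul_assoc]

theorem trace_map_C_mul_aeval_mul_adjugate_charmatrix {Y : Matrix m m A}
    (hY : ∀ k, (Y ^ (k + 1)).trace = 0) (p : A[X]) :
    (C.mapMatrix Y * C.mapMatrix (aeval Y p) * adjugate (charmatrix Y)).trace =
      p * (C.mapMatrix Y * adjugate (charmatrix Y)).trace := by
  induction p using Polynomial.induction_on' with
  | add p q hp hq => simp only [map_add, mul_add, add_mul, trace_add, hp, hq]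
  | monomial k a =>
    have hmap : C.mapMatrix (aeval Y (monomial k a)) = C a • C.mapMatrix Y ^ k := by
      rw [aeval_monomial, ← Algebra.smul_def, ← map_pow]
      ext1 i j
      simp
    rw [hmap, mul_smul_comm, ← pow_succ', smul_mul_assoc, trace_smul,
      trace_map_C_pow_succ_mul_adjugate_charmatrix hY, smul_eq_mul, ← mul_assoc,
      C_mul_X_pow_eq_monomial]

theorem X_mul_derivative_charpoly {Y : Matrix m m A} (hY : ∀ k, (Y ^ (k + 1)).trace = 0) :
    X * derivative Y.charpoly = Fintype.card m • Y.charpoly := by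
  have hzero : (C.mapMatrix Y * adjugate (charmatrix Y)).trace = 0 := by
    refine Y.charpoly_monic.mul_right_eq_zero_iff.mp ?_
    rw [← trace_map_C_mul_aeval_mul_adjugate_charmatrix hY, aeval_self_charpoly, map_zero,
      mul_zero, zero_mul, trace_zero]
  rw [map_C_mul_adjugate_charmatrix, trace_sub, trace_smul, trace_smul, trace_one, sub_eq_zero,
    smul_eq_mul, smul_eq_mul, ← derivative_charpoly] at hzero
  rw [hzero, nsmul_eq_mul, mul_comm]

theorem charpoly_eq_X_pow_card [IsAddTorsionFree A] {Y : Matrix m m A}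
    (hY : ∀ k, (Y ^ (k + 1)).trace = 0) : Y.charpoly = X ^ Fintype.card m := by
  nontriviality A
  ext k
  rw [coeff_X_pow]
  split_ifs with hk
  · rw [hk, ← Y.charpoly_natDegree_eq_dim, Y.charpoly_monic.coeff_natDegree]
  · have hcoeff : k • Y.charpoly.coeff k = Fintype.card m • Y.charpoly.coeff k := by
      rw [← coeff_smul (Fintype.card m), ← X_mul_derivative_charpoly hY]
      cases k with
      | zero => simp
      | succ k => rw [coeff_X_mul, coeff_derivative, nsmul_eq_mul, mul_comm, Nat.cast_succ]
    rw [← natCast_zsmul, ← natCast_zsmul] at hcoeff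
    by_contra hne
    exact hk (Int.natCast_inj.mp (smul_left_injective ℤ hne hcoeff))

theorem pow_card_eq_zero_of_trace_pow_succ_eq_zero [IsAddTorsionFree A] {Y : Matrix m m A}
    (hY : ∀ k, (Y ^ (k + 1)).trace = 0) : Y ^ Fintype.card m = 0 := by
  simpa [charpoly_eq_X_pow_card hY] using Y.aeval_self_charpoly

end NilpotencyFromTraces

section Anticommuting

variable {S m n : Type*} [Ring S] [Fintype m] [Fintype n]

theorem trace_mul_eq_neg_trace_mul {V : Matrix m n S} {W : Matrix n m S}
    (h : ∀ p q, V p q * W q p = -(W q p * V p q)) : (V * W).trace = -(W * V).trace := by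
  simp only [trace, diag_apply, mul_apply, h, Finset.sum_neg_distrib]
  rw [Finset.sum_comm]

theorem trace_mul_self_mul_eq_zero [IsAddTorsionFree S] {V W : Matrix m m S}
    (hV : ∀ p q r s, V p q * V r s = -(V r s * V p q))
    (hW : ∀ p q, W p q ∈ Subring.center S) (hVW : Commute V W) : (V * V * W).trace = 0 := by
  have hanti (p q : m) : V p q * (V * W) q p = -((V * W) q p * V p q) := by
    simp only [mul_apply, Finset.mul_sum, Finset.sum_mul, ← Finset.sum_neg_distrib]
    refine Finset.sum_congr rfl fun r _ => ?_
    rw [← mul_assoc, hV, neg_mul, mul_assoc, mul_assoc, Subring.mem_center_iff.mp (hW r p)]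
  have hneg : (V * V * W).trace = -(V * V * W).trace := by
    calc (V * V * W).trace = -(V * W * V).trace := by
          rw [mul_assoc, trace_mul_eq_neg_trace_mul hanti]
      _ = -(V * V * W).trace := by rw [mul_assoc V W V, ← hVW.eq, mul_assoc]
  exact self_eq_neg.mp hneg

theorem pow_two_mul_card_eq_zero_of_anticommute [IsAddTorsionFree S] [DecidableEq m]
    {V : Matrix m m S} (hV : ∀ p q r s, V p q * V r s = -(V r s * V p q))
    (hcenter : ∀ p q r s, V p q * V r s ∈ Subring.center S) :
    V ^ (2 * Fintype.card m) = 0 := by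
  let Y : Matrix m m (Subring.center S) :=
    of fun p q => ⟨(V * V) p q, sum_mem fun r _ => hcenter p r r q⟩
  let φ : Matrix m m (Subring.center S) →+* Matrix m m S := (Subring.center S).subtype.mapMatrix
  have hY : φ Y = V * V := rfl
  have : IsAddTorsionFree (Subring.center S) :=
    Function.Injective.isAddTorsionFree (Subring.center S).subtype.toAddMonoidHom
      Subtype.val_injective
  have htrace (k : ℕ) : (Y ^ (k + 1)).trace = 0 := by
    have hVY : Commute V (φ (Y ^ k)) := by
      rw [map_pow, hY]
      exact ((Commute.refl V).mul_right (Commute.refl V)).pow_right k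
    have h := trace_mul_self_mul_eq_zero hV (W := φ (Y ^ k)) (fun p q => ((Y ^ k) p q).2) hVY
    rw [← hY, ← map_mul, ← pow_succ'] at h
    exact Subtype.val_injective ((AddMonoidHom.map_trace (Subring.center S).subtype _).trans h)
  rw [pow_mul, sq, ← hY, ← map_pow, pow_card_eq_zero_of_trace_pow_succ_eq_zero htrace, map_zero]

end Anticommuting

section ExteriorAlgebraMatrix

variable {R M m : Type*} [CommRing R] [AddCommGroup M] [Module R M]

theorem ι_mul_ι_eq_neg (u v : M) :
    ExteriorAlgebra.ι R u * ExteriorAlgebra.ι R v =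
      -(ExteriorAlgebra.ι R v * ExteriorAlgebra.ι R u) :=
  eq_neg_of_add_eq_zero_left (ExteriorAlgebra.ι_add_mul_swap u v)

theorem ι_mul_ι_mem_center (u v : M) :
    ExteriorAlgebra.ι R u * ExteriorAlgebra.ι R v ∈ Subring.center (ExteriorAlgebra R M) := by
  rw [Subring.mem_center_iff]
  intro b
  induction b using ExteriorAlgebra.induction with
  | algebraMap r => exact Algebra.commutes _ _
  | ι w =>
    rw [← mul_assoc, ι_mul_ι_eq_neg w u, neg_mul, mul_assoc, ι_mul_ι_eq_neg w v, mul_neg, neg_neg,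
      mul_assoc]
  | mul a b ha hb => rw [mul_assoc, hb, ← mul_assoc, ha, mul_assoc]
  | add a b ha hb => rw [add_mul, mul_add, ha, hb]

theorem map_ι_pow_two_mul_card_eq_zero [Algebra ℚ R] [Fintype m] [DecidableEq m]
    (v : Matrix m m M) : v.map (ExteriorAlgebra.ι R) ^ (2 * Fintype.card m) = 0 := by
  let := Module.compHom (ExteriorAlgebra R M) (algebraMap ℚ R)
  have := IsAddTorsionFree.of_module_rat (ExteriorAlgebra R M)
  exact pow_two_mul_card_eq_zero_of_anticommute (fun _ _ _ _ => ι_mul_ι_eq_neg _ _)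
    fun _ _ _ _ => ι_mul_ι_mem_center _ _

end ExteriorAlgebraMatrix

section StandardPolynomial

variable {A B : Type*} [Ring A] [Ring B] {d : ℕ}

theorem map_stdPoly (f : A →+* B) (x : Fin d → A) : f (stdPoly d x) = stdPoly d (f ∘ x) := by
  simp only [stdPoly, map_sum, map_zsmul, map_list_prod, List.map_ofFn, Function.comp_def]

theorem stdPoly_eq_zero_of_injective {f : A →+* B} (hf : Function.Injective f) {x : Fin d → A}
    (h : stdPoly d (f ∘ x) = 0) : stdPoly d x = 0 :=
  (map_eq_zero_iff f hf).mp ((map_stdPoly f x).trans h)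

end StandardPolynomial

section RossetMatrix

variable {R m : Type*} [CommRing R] {d : ℕ}

/-- Rosset's matrix `∑ k, x k ⊗ e k`, where `e 0, …, e (d - 1)` are the standard basis vectors of
`R ^ d` viewed in its exterior algebra. The definition collects the coefficients of each entry. -/
noncomputable def rossetMatrix (x : Fin d → Matrix m m R) :
    Matrix m m (ExteriorAlgebra R (Fin d → R)) :=
  (of fun p q k => x k p q).map (ExteriorAlgebra.ι R)

theorem rossetMatrix_eq_sum (x : Fin d → Matrix m m R) :
    rossetMatrix x = ∑ k, (x k).map (· • ExteriorAlgebra.ι R (Pi.single k (1 : R))) := by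
  ext p q
  rw [rossetMatrix, map_apply, of_apply, pi_eq_sum_univ' fun k => x k p q, map_sum,
    Matrix.sum_apply]
  refine Finset.sum_congr rfl fun k _ => ?_
  rw [map_smul, map_apply]

theorem eq_zero_of_smul_ιMulti_single_eq_zero {a : R}
    (h : a • ExteriorAlgebra.ιMulti R d (fun k => Pi.single k (1 : R)) = 0) : a = 0 := by
  have hdet := congrArg (ExteriorAlgebra.liftAlternating (Pi.single d detRowAlternating)) h
  rw [map_smul, ExteriorAlgebra.liftAlternating_apply_ιMulti, map_zero, Pi.single_eq_same] at hdet
  have hone : (fun k : Fin d => Pi.single k (1 : R)) = (1 : Matrix (Fin d) (Fin d) R) := by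
    ext i j
    simp [one_apply, Pi.single_apply, eq_comm]
  rwa [hone, show detRowAlternating (1 : Matrix (Fin d) (Fin d) R) = 1 from det_one, smul_eq_mul,
    mul_one] at hdet

variable [Fintype m] [DecidableEq m]

theorem prod_ofFn_map_smul {E : Type*} [Ring E] [Algebra R E] (y : Fin d → Matrix m m R)
    (a : Fin d → E) : (List.ofFn fun i => (y i).map (· • a i)).prod =
      (List.ofFn y).prod.map (· • (List.ofFn a).prod) := by
  induction d with
  | zero =>
    ext p q
    obtain rfl | hpq := eq_or_ne p q <;> simp [*]
  | succ d ih =>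
    ext p q
    simp only [List.ofFn_succ, List.prod_cons, ih, mul_apply, map_apply, smul_mul_smul_comm,
      Finset.sum_smul]

theorem rossetMatrix_pow (x : Fin d → Matrix m m R) : rossetMatrix x ^ d =
    (stdPoly d x).map (· • ExteriorAlgebra.ιMulti R d fun k => Pi.single k (1 : R)) := by
  set e : Fin d → Fin d → R := fun k => Pi.single k 1
  have hexpand : rossetMatrix x ^ d = ∑ f : Fin d → Fin d,
      (List.ofFn (x ∘ f)).prod.map (· • ExteriorAlgebra.ιMulti R d (e ∘ f)) := by
    rw [← MultilinearMap.mkPiAlgebraFin_apply_const (R := ℤ), rossetMatrix_eq_sum,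
      MultilinearMap.map_sum]
    exact Finset.sum_congr rfl fun f _ => prod_ofFn_map_smul (x ∘ f) _
  rw [hexpand]
  symm
  ext p q
  simp only [stdPoly, map_apply, Matrix.sum_apply, Finset.sum_smul]
  refine Fintype.sum_of_injective (fun σ : Equiv.Perm (Fin d) => ⇑σ) DFunLike.coe_injective _ _
    (fun f hf => ?_) fun σ => ?_
  · have hinj : ¬ Function.Injective f := fun h =>
      hf ⟨Equiv.ofBijective f (Finite.injective_iff_bijective.mp h), rfl⟩
    rw [AlternatingMap.map_eq_zero_of_not_injective _ _ fun h => hinj h.of_comp, smul_zero]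
  · rw [AlternatingMap.map_perm, Units.smul_def, smul_comm, Matrix.smul_apply, smul_assoc]
    rfl

end RossetMatrix

section AmitsurLevitzki

variable {R m : Type*} [CommRing R] [Fintype m] [DecidableEq m] {d : ℕ}

theorem stdPoly_eq_zero_of_algebra_rat [Algebra ℚ R] (hd : 2 * Fintype.card m ≤ d)
    (x : Fin d → Matrix m m R) : stdPoly d x = 0 := by
  have hpow : rossetMatrix x ^ d = 0 := pow_eq_zero_of_le hd (map_ι_pow_two_mul_card_eq_zero _)
  rw [rossetMatrix_pow] at hpow
  ext p q
  exact eq_zero_of_smul_ιMulti_single_eq_zero (congr_fun₂ hpow p q)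

theorem amitsur_levitzki (hd : 2 * Fintype.card m ≤ d) (x : Fin d → Matrix m m R) :
    stdPoly d x = 0 := by
  let generic : Fin d → Matrix m m (MvPolynomial (Fin d × m × m) ℤ) :=
    fun k => of fun p q => .X (k, p, q)
  have hgeneric : stdPoly d generic = 0 :=
    stdPoly_eq_zero_of_injective
      (f := (MvPolynomial.map (Int.castRingHom ℚ)).mapMatrix)
      (map_injective (MvPolynomial.map_injective _ Int.cast_injective))
      (stdPoly_eq_zero_of_algebra_rat hd _)
  let φ := MvPolynomial.eval₂Hom (Int.castRingHom R) fun k : Fin d × m × m => x k.1 k.2.1 k.2.2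
  have hφ : x = φ.mapMatrix ∘ generic := by
    ext k p q
    simp [φ, generic]
  rw [hφ, ← map_stdPoly, hgeneric, map_zero]

end AmitsurLevitzki

section Truncation

variable {A : Type*} [Ring A] {e f : A}

/-- For an idempotent `e`, the compression of `x` to the complementary corner of the ring. For
`e = Matrix.single b b 1` this erases row `b` and column `b` of a matrix. -/
def truncate (e x : A) : A :=
  (1 - e) * x * (1 - e)

theorem truncate_truncate (hef : e * f = 0) (hfe : f * e = 0) (x : A) :
    truncate e (truncate f x) = truncate (e + f) x := by
  have h₁ : (1 - e) * (1 - f) = 1 - (e + f) := by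
    rw [mul_sub, mul_one, sub_mul, one_mul, hef, sub_zero, sub_sub]
  have h₂ : (1 - f) * (1 - e) = 1 - (e + f) := by
    rw [mul_sub, mul_one, sub_mul, one_mul, hfe, sub_zero, sub_sub, add_comm]
  rw [truncate, truncate, truncate, mul_assoc, mul_assoc _ (1 - f), h₂, ← mul_assoc, ← mul_assoc,
    h₁]

variable {Λ : Subsemigroup A} {L : List A}

theorem mul_prod_map_truncate {z : A} (hzf : z * f = 0) (hz : ∀ y ∈ Λ, z * y * f = 0)
    (hL : ∀ y ∈ L, y ∈ Λ) : z * (L.map (truncate f)).prod = z * L.prod := by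
  induction L generalizing z with
  | nil => rfl
  | cons x L ih =>
    obtain ⟨hx, hL⟩ := List.forall_mem_cons.mp hL
    have hzx : z * truncate f x = z * x := by
      rw [truncate, mul_assoc, ← mul_assoc, mul_sub, mul_one, hzf, sub_zero, ← mul_assoc, mul_sub,
        mul_one, hz x hx, sub_zero]
    rw [List.map_cons, List.prod_cons, List.prod_cons, ← mul_assoc, hzx, ← mul_assoc]
    refine ih (hz x hx) (fun y hy => ?_) hL
    rw [mul_assoc z, hz _ (mul_mem hx hy)]

-- A nonzero word in elements of `Λ` cannot pass through both of the corners `e` and `f`.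
theorem prod_add_prod_map_truncate_add (hef : e * f = 0) (hfe : f * e = 0)
    (hΛ : ∀ y ∈ Λ, e * y * f = 0 ∧ f * y * e = 0) (hL : ∀ y ∈ L, y ∈ Λ) :
    L.prod + (L.map (truncate (e + f))).prod =
      (L.map (truncate e)).prod + (L.map (truncate f)).prod := by
  induction L with
  | nil => rfl
  | cons x L ih =>
    obtain ⟨hx, hL⟩ := List.forall_mem_cons.mp hL
    obtain ⟨hexf, hfxe⟩ := hΛ x hx
    have ih := ih hL
    have he := mul_prod_map_truncate hef (fun y hy => (hΛ y hy).1) hL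
    have hf := mul_prod_map_truncate hfe (fun y hy => (hΛ y hy).2) hL
    have hex := mul_prod_map_truncate hexf
      (fun y hy => by rw [mul_assoc e, (hΛ _ (mul_mem hx hy)).1]) hL
    have hfx := mul_prod_map_truncate hfxe
      (fun y hy => by rw [mul_assoc f, (hΛ _ (mul_mem hx hy)).2]) hL
    simp only [List.map_cons, List.prod_cons]
    set W := L.prod
    set We := (L.map (truncate e)).prod
    set Wf := (L.map (truncate f)).prod
    set Wef := (L.map (truncate (e + f))).prod
    have hWe : e * Wef = e * We := by
      linear_combination (norm := noncomm_ring) e * ih + he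
    have hWf : f * Wef = f * Wf := by
      linear_combination (norm := noncomm_ring) f * ih + hf
    simp only [truncate]
    linear_combination (norm := noncomm_ring)
      (1 - (e + f)) * x * (ih - hWe - hWf) - hfx - hex + hfxe * We + hexf * Wf

theorem stdPoly_add_stdPoly_truncate_add (hef : e * f = 0) (hfe : f * e = 0)
    (hΛ : ∀ y ∈ Λ, e * y * f = 0 ∧ f * y * e = 0) {d : ℕ} {x : Fin d → A} (hx : ∀ k, x k ∈ Λ) :
    stdPoly d x + stdPoly d (truncate (e + f) ∘ x) =
      stdPoly d (truncate e ∘ x) + stdPoly d (truncate f ∘ x) := by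
  simp only [stdPoly, ← Finset.sum_add_distrib, ← smul_add]
  refine Finset.sum_congr rfl fun σ _ => congrArg _ ?_
  have h := prod_add_prod_map_truncate_add hef hfe hΛ (L := List.ofFn fun i => x (σ i))
    (List.forall_mem_ofFn_iff.mpr fun i => hx (σ i))
  simpa only [List.map_ofFn, Function.comp_def] using h

end Truncation

section Conjugation

variable {R m n : Type*} [Ring R] [Fintype m] [Fintype n] [DecidableEq m] [DecidableEq n]
  {v : Matrix m n R} {u : Matrix n m R}

theorem prod_map_conj (huv : u * v = 1) {L : List (Matrix n n R)} (hL : L ≠ []) :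
    (L.map fun y => v * y * u).prod = v * L.prod * u := by
  induction L with
  | nil => exact absurd rfl hL
  | cons y L ih =>
    obtain rfl | hL := eq_or_ne L []
    · simp
    · rw [List.map_cons, List.prod_cons, ih hL, List.prod_cons, Matrix.mul_assoc v L.prod,
        ← Matrix.mul_assoc, Matrix.mul_assoc (v * y), huv, Matrix.mul_one]
      simp only [Matrix.mul_assoc]

theorem stdPoly_conj (huv : u * v = 1) {d : ℕ} (hd : d ≠ 0) (y : Fin d → Matrix n n R) :
    stdPoly d (fun k => v * y k * u) = v * stdPoly d y * u := by
  simp only [stdPoly, Matrix.mul_sum, Matrix.sum_mul, Matrix.mul_smul, Matrix.smul_mul]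
  refine Finset.sum_congr rfl fun σ _ => congrArg _ ?_
  rw [← prod_map_conj huv (mt List.ofFn_eq_nil_iff.mp hd), List.map_ofFn]
  rfl

theorem submatrix_val_mul_submatrix_val (b : m) :
    (1 : Matrix m m R).submatrix id (Subtype.val : {p // p ≠ b} → m) *
      (1 : Matrix m m R).submatrix Subtype.val id = (1 - single b b 1 : Matrix m m R) := by
  have hsingle (p q : m) : single b b (1 : R) p q =
      (1 : Matrix m m R) p b * (1 : Matrix m m R) b q := by
    simp only [single_apply, one_apply, mul_ite, mul_one, mul_zero, eq_comm (a := p)]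
    split_ifs <;> simp_all
  have hone (p q : m) : (1 : Matrix m m R) p q =
      ∑ r, (1 : Matrix m m R) p r * (1 : Matrix m m R) r q := by
    rw [← mul_apply, mul_one]
  ext p q
  rw [Matrix.sub_apply, hone p q, hsingle, Fintype.sum_eq_add_sum_subtype_ne _ b,
    add_sub_cancel_left]
  rfl

end Conjugation

section MatrixTruncation

variable {R m : Type*} [CommRing R] [Fintype m] [DecidableEq m]

theorem stdPoly_truncate_single_eq_zero (b : m) {d : ℕ} (hd : d ≠ 0)
    (hcard : 2 * (Fintype.card m - 1) ≤ d) (x : Fin d → Matrix m m R) :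
    stdPoly d (truncate (single b b 1) ∘ x) = 0 := by
  let v : Matrix m {p // p ≠ b} R := (1 : Matrix m m R).submatrix id Subtype.val
  let u : Matrix {p // p ≠ b} m R := (1 : Matrix m m R).submatrix Subtype.val id
  have huv : u * v = 1 := by
    rw [← submatrix_mul _ _ _ id _ Function.bijective_id, mul_one,
      submatrix_one _ Subtype.val_injective]
  have hvu : v * u = 1 - single b b 1 := submatrix_val_mul_submatrix_val b
  have hconj : truncate (single b b 1) ∘ x = fun k => v * (u * x k * v) * u := by
    ext1 k
    simp only [Function.comp_apply, truncate, ← hvu, Matrix.mul_assoc]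
  have hsmall : 2 * Fintype.card {p // p ≠ b} ≤ d := by
    rwa [Fintype.card_subtype_compl, Fintype.card_subtype_eq]
  rw [hconj, stdPoly_conj huv hd, amitsur_levitzki hsmall, Matrix.mul_zero, Matrix.zero_mul]

theorem not_uniserial_satisfies_general {Λ : Subsemigroup (Matrix m m R)} {b c : m} (hbc : b ≠ c)
    (hΛ : ∀ y ∈ Λ, y b c = 0 ∧ y c b = 0) {d : ℕ} (hd : 2 * Fintype.card m - 2 ≤ d)
    (x : Fin d → Matrix m m R) (hx : ∀ k, x k ∈ Λ) : stdPoly d x = 0 := by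
  have hd₀ : d ≠ 0 := by
    have : 1 < Fintype.card m := Fintype.one_lt_card_iff.mpr ⟨b, c, hbc⟩
    lia
  have htrunc (a : m) (y : Fin d → Matrix m m R) : stdPoly d (truncate (single a a 1) ∘ y) = 0 :=
    stdPoly_truncate_single_eq_zero a hd₀ (by rwa [Nat.mul_sub_one]) y
  have hef : single b b (1 : R) * single c c 1 = 0 := single_mul_single_of_ne 1 b b c hbc 1
  have hfe : single c c (1 : R) * single b b 1 = 0 := single_mul_single_of_ne 1 c c b hbc.symm 1
  have h := stdPoly_add_stdPoly_truncate_add hef hfe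
    (fun y hy => by simp [single_mul_mul_single, hΛ y hy]) hx
  have hcomp : truncate (single b b 1 + single c c 1) ∘ x =
      truncate (single b b 1) ∘ truncate (single c c 1) ∘ x :=
    funext fun k => (truncate_truncate hef hfe (x k)).symm
  rwa [hcomp, htrunc, htrunc, htrunc, add_zero, add_zero] at h

end MatrixTruncation

section Blocks

variable {t : ℕ} (ℓ : Fin t → ℕ)

theorem cum_succ {k : ℕ} (hk : k < t) : cum ℓ (k + 1) = cum ℓ k + ℓ ⟨k, hk⟩ := by
  have hsplit (j : Fin t) : (if (j : ℕ) < k + 1 then ℓ j else 0) =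
      (if (j : ℕ) < k then ℓ j else 0) + if j = ⟨k, hk⟩ then ℓ j else 0 := by
    simp only [Fin.ext_iff]
    split_ifs <;> lia
  simp only [cum, hsplit, Finset.sum_add_distrib, Finset.sum_ite_eq', Finset.mem_univ, if_true]

theorem cum_le_sum (k : ℕ) : cum ℓ k ≤ ∑ j, ℓ j :=
  Finset.sum_le_sum fun j _ => by split_ifs <;> simp

theorem exists_cum_le_lt {k : ℕ} (hk : k < t) (hpos : 0 < ℓ ⟨k, hk⟩) :
    ∃ p : Fin (∑ j, ℓ j), cum ℓ k ≤ p ∧ p < cum ℓ (k + 1) := by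
  have hlt : cum ℓ k < cum ℓ (k + 1) := by
    rw [cum_succ ℓ hk]
    exact Nat.lt_add_of_pos_right hpos
  exact ⟨⟨cum ℓ k, hlt.trans_le (cum_le_sum ℓ _)⟩, le_rfl, hlt⟩

end Blocks

/-- If `Λ ⊆ E_{(ℓ₁,…,ℓ_t)}(F)` is not uniserial at `i`, i.e. the `(i,i+1)` off-diagonal
block of every element of `Λ` vanishes (so `Λ_{i(i+1)}` sits block-diagonally inside
`M_{ℓ_i}(F) × M_{ℓ_{i+1}}(F)`), then `Λ` satisfies the standard identity `s_{2n-2}`. -/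
theorem not_uniserial_satisfies (F : Type*) [Field F] (t : ℕ) (ht : 2 ≤ t)
    (ℓ : Fin t → ℕ) (hℓ : ∀ i, 0 < ℓ i) (n : ℕ) (hn : n = ∑ i, ℓ i)
    (Λ : Subalgebra F (Matrix (Fin n) (Fin n) F))
    (hUT : ∀ x ∈ Λ, BlockUT ℓ x)
    (i : ℕ) (hi : i + 1 < t)
    (hblock : ∀ x ∈ Λ, ∀ p q : Fin n,
      cum ℓ i ≤ (p : ℕ) → (p : ℕ) < cum ℓ (i + 1) →
      cum ℓ (i + 1) ≤ (q : ℕ) → (q : ℕ) < cum ℓ (i + 2) → x p q = 0) :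
    ∀ x : Fin (2 * n - 2) → Matrix (Fin n) (Fin n) F,
      (∀ k, x k ∈ Λ) → stdPoly (2 * n - 2) x = 0 := by
  subst hn
  intro x hx
  obtain ⟨b, hb, hb'⟩ := exists_cum_le_lt ℓ (Nat.lt_of_succ_lt hi) (hℓ _)
  obtain ⟨c, hc, hc'⟩ := exists_cum_le_lt ℓ hi (hℓ _)
  refine not_uniserial_satisfies_general (Λ := Λ.toSubsemiring.toSubmonoid.toSubsemigroup)
    (Fin.ne_of_lt (hb'.trans_le hc)) (fun y hy => ⟨?_, ?_⟩) (by simp) x hx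
  · exact hblock y hy b c hb hb' hc hc'
  · exact hUT y hy c b ⟨i + 1, hb', hc⟩
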